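/- arXiv:2602.13025 — 2 statements merged into one kernel-verified Lean document; each statement's English description precedes it below -/
import Mathlib

section
/- The Gaussian Poincaré inequality: for every smooth compactly supported (or suitably integrable Sobolev) function f on ℝⁿ, Var_{γ_n}(f) = ∫ f² dγ_n − (∫ f dγ_n)² ≤ ∫ |∇f|² dγ_n. -/
open MeasureTheory Real

/-- The standard Gaussian probability measure `γ_n` on `ℝⁿ`, with density
`(2π)^(−n/2) e^(−|x|²/2)` with respect to Lebesgue measure. -/
noncomputable def gaussianMeasureN (n : ℕ) : Measure (EuclideanSpace ℝ (Fin n)) :=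
  volume.withDensity
    (fun x => ENNReal.ofReal ((2 * π) ^ (-(n : ℝ) / 2) * exp (-‖x‖ ^ 2 / 2)))

open ProbabilityTheory

section GP
variable {n : ℕ}
local notation "E" => EuclideanSpace ℝ (Fin n)

noncomputable def gpDens (n : ℕ) (x : EuclideanSpace ℝ (Fin n)) : ℝ :=
  (2 * π) ^ (-(n : ℝ) / 2) * exp (-‖x‖ ^ 2 / 2)

lemma gpDens_nonneg (x : E) : 0 ≤ gpDens n x := by unfold gpDens; positivity

lemma gpDens_cont : Continuous (gpDens n) := by unfold gpDens; fun_prop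

lemma gpDens_integrable : Integrable (gpDens n) volume := by
  have h := (GaussianFourier.integrable_cexp_neg_mul_sq_norm_add (V := E) (b := 1/2)
    (by norm_num) 0 0).norm.const_mul ((2 * π) ^ (-(n : ℝ) / 2))
  refine h.congr (Filter.Eventually.of_forall fun x => ?_)
  simp only [gpDens, Complex.norm_exp]
  congr 2
  have : (-(1/2:ℂ) * (‖x‖:ℂ)^2 + 0 * ((inner ℝ (0:E) x : ℝ) : ℂ)) = ((-‖x‖^2/2 : ℝ) : ℂ) := by
    push_cast; ring
  rw [this, Complex.ofReal_re]

lemma gp_meas_eq : gaussianMeasureN n = volume.withDensity (fun x => ENNReal.ofReal (gpDens n x)) := rfl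

instance : IsFiniteMeasure (gaussianMeasureN n) := by
  rw [gp_meas_eq]
  exact isFiniteMeasure_withDensity_ofReal gpDens_integrable.2

lemma gp_integral {F : Type*} [NormedAddCommGroup F] [NormedSpace ℝ F] (g : E → F) :
    ∫ x, g x ∂(gaussianMeasureN n) = ∫ x, gpDens n x • g x := by
  rw [gp_meas_eq, integral_withDensity_eq_integral_toReal_smul]
  · simp [ENNReal.toReal_ofReal, gpDens_nonneg]
  · exact gpDens_cont.measurable.ennreal_ofReal
  · simp

lemma gp_integrable_iff (g : E → ℝ) :
    Integrable g (gaussianMeasureN n) ↔ Integrable (fun x => gpDens n x * g x) := by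
  rw [gp_meas_eq, integrable_withDensity_iff_integrable_smul']
  · simp [ENNReal.toReal_ofReal, gpDens_nonneg]
  · exact gpDens_cont.measurable.ennreal_ofReal
  · simp

lemma gp_eq_std : gaussianMeasureN n = stdGaussian E := by
  apply Measure.ext_of_charFun
  ext t
  rw [charFun_stdGaussian, charFun_apply, gp_integral]
  have h := GaussianFourier.integral_cexp_neg_mul_sq_norm_add_of_euclideanSpace (ι := Fin n)
    (b := 1/2) (by norm_num) Complex.I t
  have h2 : ∀ x : E, gpDens n x • Complex.exp ((inner ℝ x t : ℝ) * Complex.I)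
     = ((2 * π) ^ (-(n : ℝ) / 2) : ℝ) *
        Complex.exp (-(1/2) * ‖x‖ ^ 2 + Complex.I * (inner ℝ t x : ℝ)) := by
    intro x
    rw [gpDens, Complex.real_smul, Complex.exp_add, real_inner_comm]
    push_cast
    rw [mul_assoc]
    congr 3
    · ring
    · ring_nf
  simp_rw [h2]
  rw [integral_const_mul, h, ← mul_assoc]
  have h3 : (((2 * π) ^ (-(n : ℝ) / 2) : ℝ) : ℂ) * (π / (1/2)) ^ (Fintype.card (Fin n) / 2 : ℂ) = 1 := by
    have : ((π / (1/2)) ^ (Fintype.card (Fin n) / 2 : ℂ) : ℂ) = (((2 * π) ^ ((n : ℝ) / 2) : ℝ) : ℂ) := by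
      rw [Complex.ofReal_cpow (by positivity)]
      push_cast
      rw [Fintype.card_fin]; congr 1; ring
    rw [this, ← Complex.ofReal_mul, ← Real.rpow_add (by positivity)]
    simp [neg_div]
  rw [h3, one_mul]
  congr 1
  rw [Complex.I_sq]; ring

instance : IsGaussian (gaussianMeasureN n) := by rw [gp_eq_std]; infer_instance

lemma gp_rot (θ : ℝ) : ((gaussianMeasureN n).prod (gaussianMeasureN n)).map
    (ContinuousLinearMap.rotation θ) = (gaussianMeasureN n).prod (gaussianMeasureN n) := by
  apply IsGaussian.map_rotation_eq_self
  rw [gp_eq_std]; simp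

lemma gp_integrable_norm : Integrable (fun x : E => ‖x‖) (gaussianMeasureN n) :=
  (IsGaussian.integrable_id (μ := gaussianMeasureN n)).norm

lemma gpDens_hasFDerivAt (x : E) :
    HasFDerivAt (gpDens n) (-(gpDens n x) • innerSL ℝ x) x := by
  have h := ((hasStrictFDerivAt_norm_sq x).hasFDerivAt.neg.const_mul (1/2:ℝ)).exp.const_mul
    ((2 * π) ^ (-(n : ℝ) / 2))
  convert! h using 1
  · ext y; simp only [gpDens]; congr 2; ring_nf; simp; ring
  · ext y
    simp [gpDens]
    ring_nf

lemma gp_ibp {g : E → ℝ} (hg : ContDiff ℝ 1 g) {A B : ℝ} (hA : ∀ x, |g x| ≤ A)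
    (hB : ∀ x, ‖fderiv ℝ g x‖ ≤ B) (w : E) :
    ∫ v, g v * inner ℝ v w ∂(gaussianMeasureN n) = ∫ v, fderiv ℝ g v w ∂(gaussianMeasureN n) := by
  have hgc := hg.continuous
  have hdc : Continuous fun x => fderiv ℝ g x := hg.continuous_fderiv (by norm_num)
  have hfd : ∀ v, fderiv ℝ (gpDens n) v w = - (gpDens n v * inner ℝ v w) := by
    intro v; rw [(gpDens_hasFDerivAt v).fderiv]; simp
  have i1 : Integrable (fun v => fderiv ℝ g v w) (gaussianMeasureN n) := by
    refine Integrable.of_bound (by fun_prop) (B * ‖w‖) (Filter.Eventually.of_forall fun x => ?_)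
    exact (ContinuousLinearMap.le_opNorm _ _).trans (by gcongr; exact hB x)
  have i2 : Integrable (fun v => g v * inner ℝ v w) (gaussianMeasureN n) := by
    refine ((gp_integrable_norm (n := n)).const_mul (A * ‖w‖)).mono' (by fun_prop)
      (Filter.Eventually.of_forall fun x => ?_)
    rw [norm_mul]
    have := norm_inner_le_norm (𝕜 := ℝ) x w
    calc _ ≤ A * (‖x‖ * ‖w‖) := by
          gcongr
          · exact (abs_nonneg _).trans (hA x)
          · exact hA x
      _ = _ := by ring
  have i3 : Integrable g (gaussianMeasureN n) :=
    Integrable.of_bound (by fun_prop) A (Filter.Eventually.of_forall hA)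
  rw [gp_integrable_iff] at i1 i2 i3
  have := integral_mul_fderiv_eq_neg_fderiv_mul_of_integrable (μ := (volume : Measure E))
    (f := g) (g := gpDens n) (v := w)
    (by simpa only [mul_comm] using i1)
    (by refine i2.neg.congr (Filter.Eventually.of_forall fun x => ?_)
        simp only [hfd, Pi.neg_apply]; ring)
    (by simpa only [mul_comm] using i3)
    (fun x _ => (hg.differentiable (by norm_num)) x)
    (fun x _ => (gpDens_hasFDerivAt x).differentiableAt)
  rw [gp_integral, gp_integral]
  simp only [smul_eq_mul]
  simp only [hfd] at this
  rw [← neg_inj, ← integral_neg]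
  convert! this using 3
  · ring
  · ext x; ring

lemma gp_deriv_bound {f : E → ℝ} (hf : ContDiff ℝ 1 f) {A B : ℝ} (hA : ∀ x, |f x| ≤ A)
    (hB : ∀ x, ‖fderiv ℝ f x‖ ≤ B) (θ : ℝ) :
    HasDerivAt (fun θ : ℝ => ∫ z : E × E, f z.1 * f (cos θ • z.1 + sin θ • z.2)
        ∂((gaussianMeasureN n).prod (gaussianMeasureN n)))
      (∫ z : E × E, f z.1 * fderiv ℝ f (cos θ • z.1 + sin θ • z.2) (-sin θ • z.1 + cos θ • z.2)
        ∂((gaussianMeasureN n).prod (gaussianMeasureN n))) θ := by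
  have hfc := hf.continuous
  have hdc : Continuous fun x => fderiv ℝ f x := hf.continuous_fderiv (by norm_num)
  have hA0 : 0 ≤ A := (abs_nonneg _).trans (hA 0)
  have hB0 : 0 ≤ B := (norm_nonneg _).trans (hB 0)
  have i1 : Integrable (fun z : E × E => ‖z.1‖)
      ((gaussianMeasureN n).prod (gaussianMeasureN n)) := gp_integrable_norm.comp_fst _
  have i2 : Integrable (fun z : E × E => ‖z.2‖)
      ((gaussianMeasureN n).prod (gaussianMeasureN n)) := gp_integrable_norm.comp_snd _
  refine (hasDerivAt_integral_of_dominated_loc_of_deriv_le (s := Set.univ)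
    (F := fun (θ : ℝ) (z : E × E) => f z.1 * f (cos θ • z.1 + sin θ • z.2))
    (F' := fun (θ : ℝ) (z : E × E) => f z.1 *
      fderiv ℝ f (cos θ • z.1 + sin θ • z.2) (-sin θ • z.1 + cos θ • z.2))
    (bound := fun z => A * (B * (‖z.1‖ + ‖z.2‖)))
    Filter.univ_mem (Filter.Eventually.of_forall fun θ => ?_) ?_ ?_
    (Filter.Eventually.of_forall fun z θ _ => ?_) ?_
    (Filter.Eventually.of_forall fun z θ _ => ?_)).2
  · exact Continuous.aestronglyMeasurable (by fun_prop)
  · refine Integrable.of_bound (Continuous.aestronglyMeasurable (by fun_prop)) (A * A)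
      (Filter.Eventually.of_forall fun z => ?_)
    rw [norm_mul]
    exact mul_le_mul (hA _) (hA _) (norm_nonneg _) hA0
  · apply Continuous.aestronglyMeasurable
    have : Continuous fun z : E × E => fderiv ℝ f (cos θ • z.1 + sin θ • z.2) :=
      hdc.comp (by fun_prop)
    fun_prop
  · rw [norm_mul]
    refine mul_le_mul (hA _) ?_ (norm_nonneg _) hA0
    refine (ContinuousLinearMap.le_opNorm _ _).trans ?_
    refine mul_le_mul (hB _) ?_ (norm_nonneg _) hB0
    refine (norm_add_le _ _).trans ?_
    rw [norm_smul, norm_smul, norm_neg]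
    have h1 := abs_sin_le_one θ
    have h2 := abs_cos_le_one θ
    gcongr
    · exact mul_le_of_le_one_left (norm_nonneg _) h1
    · exact mul_le_of_le_one_left (norm_nonneg _) h2
  · exact ((i1.add i2).const_mul B).const_mul A
  · have hd := (hf.differentiable (by norm_num) (cos θ • z.1 + sin θ • z.2)).hasFDerivAt
    have hγ : HasDerivAt (fun θ : ℝ => cos θ • z.1 + sin θ • z.2)
        (-sin θ • z.1 + cos θ • z.2) θ :=
      ((hasDerivAt_cos θ).smul_const z.1).add ((hasDerivAt_sin θ).smul_const z.2)
    exact (hd.comp_hasDerivAt θ hγ).const_mul _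

lemma gp_integral_rot (θ : ℝ) {G : E × E → ℝ} (hG : Continuous G) :
    ∫ z, G (ContinuousLinearMap.rotation θ z) ∂((gaussianMeasureN n).prod (gaussianMeasureN n))
      = ∫ z, G z ∂((gaussianMeasureN n).prod (gaussianMeasureN n)) := by
  conv_rhs => rw [← gp_rot θ]
  rw [integral_map (by fun_prop) hG.aestronglyMeasurable]

instance : IsProbabilityMeasure (gaussianMeasureN n) := by
  rw [gp_eq_std]; infer_instance

set_option maxHeartbeats 1000000 in
lemma gp_deriv_ge {f : E → ℝ} (hf : ContDiff ℝ 1 f) {A B : ℝ} (hA : ∀ x, |f x| ≤ A)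
    (hB : ∀ x, ‖fderiv ℝ f x‖ ≤ B) (θ : ℝ) (hθ : 0 ≤ sin θ) :
    - (sin θ * ∫ x, ‖fderiv ℝ f x‖ ^ 2 ∂(gaussianMeasureN n)) ≤
    ∫ z : E × E, f z.1 * fderiv ℝ f (cos θ • z.1 + sin θ • z.2) (-sin θ • z.1 + cos θ • z.2)
        ∂((gaussianMeasureN n).prod (gaussianMeasureN n)) := by
  have hfc := hf.continuous
  have hdc : Continuous fun x => fderiv ℝ f x := hf.continuous_fderiv (by norm_num)
  have hA0 : 0 ≤ A := (abs_nonneg _).trans (hA 0)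
  have hB0 : 0 ≤ B := (norm_nonneg _).trans (hB 0)
  have i2 : Integrable (fun z : E × E => ‖z.2‖)
      ((gaussianMeasureN n).prod (gaussianMeasureN n)) := gp_integrable_norm.comp_snd _
  have hcG : Continuous fun z : E × E => f (cos θ • z.1 - sin θ • z.2) * fderiv ℝ f z.1 z.2 := by
    have : Continuous fun z : E × E => fderiv ℝ f z.1 := hdc.comp continuous_fst
    fun_prop
  have e1 : ∫ z : E × E, f z.1 *
        fderiv ℝ f (cos θ • z.1 + sin θ • z.2) (-sin θ • z.1 + cos θ • z.2)
        ∂((gaussianMeasureN n).prod (gaussianMeasureN n)) =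
      ∫ z : E × E, f (cos θ • z.1 - sin θ • z.2) * fderiv ℝ f z.1 z.2
        ∂((gaussianMeasureN n).prod (gaussianMeasureN n)) := by
    rw [← gp_integral_rot θ hcG]
    congr 1
    ext z
    simp only [ContinuousLinearMap.rotation_apply]
    congr 2
    have h := sin_sq_add_cos_sq θ
    have : z.1 = (sin θ ^ 2 + cos θ ^ 2) • z.1 := by rw [h, one_smul]
    nth_rewrite 1 [this]
    module
  have iG : Integrable (fun z : E × E => f (cos θ • z.1 - sin θ • z.2) * fderiv ℝ f z.1 z.2)
      ((gaussianMeasureN n).prod (gaussianMeasureN n)) := by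
    refine ((i2.const_mul B).const_mul A).mono' hcG.aestronglyMeasurable
      (Filter.Eventually.of_forall fun z => ?_)
    rw [norm_mul]
    refine mul_le_mul (hA _) ?_ (norm_nonneg _) hA0
    refine (ContinuousLinearMap.le_opNorm _ _).trans ?_
    exact mul_le_mul_of_nonneg_right (hB _) (norm_nonneg _)
  have hgrad : ∀ u v : E, fderiv ℝ f u v = inner ℝ v (gradient f u) := by
    intro u v
    rw [gradient, real_inner_comm, InnerProductSpace.toDual_symm_apply]
  have hgn : ∀ u : E, ‖gradient f u‖ = ‖fderiv ℝ f u‖ := by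
    intro u; rw [gradient, LinearIsometryEquiv.norm_map]
  have hgc : Continuous fun u => gradient f u := by
    unfold gradient; fun_prop
  have hcD : Continuous fun z : E × E =>
      fderiv ℝ f (cos θ • z.1 - sin θ • z.2) := hdc.comp (by fun_prop)
  have hcD1 : Continuous fun z : E × E => fderiv ℝ f z.1 := hdc.comp (by fun_prop)
  have hcg1 : Continuous fun z : E × E => gradient f z.1 := hgc.comp (by fun_prop)
  have iH : Integrable (fun z : E × E =>
      fderiv ℝ f (cos θ • z.1 - sin θ • z.2) (gradient f z.1))
      ((gaussianMeasureN n).prod (gaussianMeasureN n)) := by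
    refine Integrable.of_bound (Continuous.aestronglyMeasurable (by fun_prop)) (B * B)
      (Filter.Eventually.of_forall fun z => ?_)
    refine (ContinuousLinearMap.le_opNorm _ _).trans ?_
    rw [hgn]
    exact mul_le_mul (hB _) (hB _) (norm_nonneg _) hB0
  have e2 : ∫ z : E × E, f (cos θ • z.1 - sin θ • z.2) * fderiv ℝ f z.1 z.2
        ∂((gaussianMeasureN n).prod (gaussianMeasureN n)) =
      - sin θ * ∫ z : E × E, fderiv ℝ f (cos θ • z.1 - sin θ • z.2) (gradient f z.1)
        ∂((gaussianMeasureN n).prod (gaussianMeasureN n)) := by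
    rw [integral_prod _ iG, integral_prod _ iH, ← integral_const_mul]
    congr 1
    ext u
    simp only [hgrad u]
    have hfd : ∀ v : E, HasFDerivAt (fun v => f (cos θ • u - sin θ • v))
        ((fderiv ℝ f (cos θ • u - sin θ • v)).comp (-(sin θ • ContinuousLinearMap.id ℝ E))) v := by
      intro v
      exact (hf.differentiable (by norm_num) (cos θ • u - sin θ • v)).hasFDerivAt.comp v
        (((hasFDerivAt_id v).const_smul (sin θ)).const_sub (cos θ • u))
    rw [gp_ibp (g := fun v => f (cos θ • u - sin θ • v)) (A := A) (B := B)
      (hf.comp (by fun_prop)) (fun x => hA _)]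
    · rw [← integral_const_mul]
      congr 1
      ext v
      rw [(hfd v).fderiv]
      simp
    · intro v
      rw [(hfd v).fderiv]
      refine ContinuousLinearMap.opNorm_le_bound _ hB0 fun y => ?_
      have hy : ((fderiv ℝ f (cos θ • u - sin θ • v)).comp
          (-(sin θ • ContinuousLinearMap.id ℝ E))) y =
          -(sin θ * fderiv ℝ f (cos θ • u - sin θ • v) y) := by simp
      rw [hy, norm_neg, norm_mul]
      have h1 : ‖fderiv ℝ f (cos θ • u - sin θ • v) y‖ ≤ B * ‖y‖ :=
        (fderiv ℝ f (cos θ • u - sin θ • v)).le_of_opNorm_le (hB _) y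
      exact (mul_le_of_le_one_left (norm_nonneg _) (abs_sin_le_one θ)).trans h1
  have iD : Integrable (fun x : E => ‖fderiv ℝ f x‖ ^ 2) (gaussianMeasureN n) := by
    refine Integrable.of_bound (Continuous.aestronglyMeasurable (by fun_prop)) (B ^ 2)
      (Filter.Eventually.of_forall fun z => ?_)
    rw [norm_pow, norm_norm]
    exact pow_le_pow_left₀ (norm_nonneg _) (hB _) 2
  have iK1 : Integrable (fun z : E × E => ‖fderiv ℝ f (cos θ • z.1 - sin θ • z.2)‖ ^ 2)
      ((gaussianMeasureN n).prod (gaussianMeasureN n)) := by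
    refine Integrable.of_bound (Continuous.aestronglyMeasurable (by fun_prop)) (B ^ 2)
      (Filter.Eventually.of_forall fun z => ?_)
    rw [norm_pow, norm_norm]
    exact pow_le_pow_left₀ (norm_nonneg _) (hB _) 2
  have eK2 : ∫ z : E × E, ‖fderiv ℝ f z.1‖ ^ 2
        ∂((gaussianMeasureN n).prod (gaussianMeasureN n)) =
      ∫ x, ‖fderiv ℝ f x‖ ^ 2 ∂(gaussianMeasureN n) := by
    rw [integral_fun_fst (fun x => ‖fderiv ℝ f x‖ ^ 2)]; simp
  have eK1 : ∫ z : E × E, ‖fderiv ℝ f (cos θ • z.1 - sin θ • z.2)‖ ^ 2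
        ∂((gaussianMeasureN n).prod (gaussianMeasureN n)) =
      ∫ x, ‖fderiv ℝ f x‖ ^ 2 ∂(gaussianMeasureN n) := by
    rw [← eK2, ← gp_integral_rot (-θ) (G := fun z : E × E => ‖fderiv ℝ f z.1‖ ^ 2) (by fun_prop)]
    simp [ContinuousLinearMap.rotation_apply, sub_eq_add_neg]
  have key : ∫ z : E × E, fderiv ℝ f (cos θ • z.1 - sin θ • z.2) (gradient f z.1)
        ∂((gaussianMeasureN n).prod (gaussianMeasureN n)) ≤
      ∫ x, ‖fderiv ℝ f x‖ ^ 2 ∂(gaussianMeasureN n) := by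
    calc _ ≤ ∫ z : E × E, (1/2 : ℝ) * (‖fderiv ℝ f (cos θ • z.1 - sin θ • z.2)‖ ^ 2
              + ‖fderiv ℝ f z.1‖ ^ 2)
            ∂((gaussianMeasureN n).prod (gaussianMeasureN n)) := by
          refine integral_mono iH ((iK1.add (iD.comp_fst _)).const_mul (1/2 : ℝ)) fun z => ?_
          have h := (le_abs_self _).trans (ContinuousLinearMap.le_opNorm
            (fderiv ℝ f (cos θ • z.1 - sin θ • z.2)) (gradient f z.1))
          rw [hgn] at h
          simp only [Pi.add_apply]
          nlinarith [sq_nonneg (‖fderiv ℝ f (cos θ • z.1 - sin θ • z.2)‖ - ‖fderiv ℝ f z.1‖)]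
      _ = _ := by
          rw [integral_const_mul, integral_add iK1 (iD.comp_fst _), eK1, eK2]; ring
  rw [e1, e2]
  nlinarith [mul_le_mul_of_nonneg_left key hθ]

end GP

/-- The Gaussian Poincaré inequality: for every smooth compactly supported
`f : ℝⁿ → ℝ`, `Var_{γ_n}(f) = ∫ f² dγ_n − (∫ f dγ_n)² ≤ ∫ |∇f|² dγ_n`. -/
theorem gaussian_poincare (n : ℕ) (f : EuclideanSpace ℝ (Fin n) → ℝ)
    (hf : ContDiff ℝ (⊤ : ℕ∞) f) (hsupp : HasCompactSupport f) :
    (∫ x, (f x) ^ 2 ∂(gaussianMeasureN n)) - (∫ x, f x ∂(gaussianMeasureN n)) ^ 2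
      ≤ ∫ x, ‖gradient f x‖ ^ 2 ∂(gaussianMeasureN n) := by
  have hf1 : ContDiff ℝ 1 f := hf.of_le (by exact_mod_cast le_top)
  have hdc : Continuous fun x => fderiv ℝ f x := hf1.continuous_fderiv (by norm_num)
  obtain ⟨A, hA⟩ := hsupp.exists_bound_of_continuous hf.continuous
  obtain ⟨B, hB⟩ := (hsupp.fderiv ℝ).exists_bound_of_continuous hdc
  have hgn : ∀ u, ‖gradient f u‖ = ‖fderiv ℝ f u‖ := by
    intro u; rw [gradient, LinearIsometryEquiv.norm_map]
  simp only [hgn]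
  set D := ∫ x, ‖fderiv ℝ f x‖ ^ 2 ∂(gaussianMeasureN n) with hD
  have hder := gp_deriv_bound hf1 hA hB
  have hge := gp_deriv_ge hf1 hA hB
  set φ : ℝ → ℝ := fun θ => ∫ z : EuclideanSpace ℝ (Fin n) × EuclideanSpace ℝ (Fin n),
    f z.1 * f (cos θ • z.1 + sin θ • z.2)
        ∂((gaussianMeasureN n).prod (gaussianMeasureN n)) with hφ
  have hψ := fun θ => (hder θ).sub ((hasDerivAt_cos θ).mul_const D)
  have hmono : MonotoneOn (fun θ => φ θ - cos θ * D) (Set.Icc 0 (π / 2)) := by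
    refine monotoneOn_of_deriv_nonneg (convex_Icc _ _)
      (fun θ _ => (hψ θ).continuousAt.continuousWithinAt)
      (fun θ _ => (hψ θ).differentiableAt.differentiableWithinAt) fun θ hθ => ?_
    rw [interior_Icc] at hθ
    have hs : 0 ≤ sin θ := sin_nonneg_of_nonneg_of_le_pi hθ.1.le (by linarith [hθ.2, pi_pos])
    have := hge θ hs
    refine le_of_le_of_eq ?_ (hψ θ).deriv.symm
    linarith
  have h := hmono (Set.left_mem_Icc.2 (by positivity)) (Set.right_mem_Icc.2 (by positivity))
    (show (0:ℝ) ≤ π / 2 by positivity)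
  have h0 : φ 0 = ∫ x, (f x) ^ 2 ∂(gaussianMeasureN n) := by
    simp only [hφ, cos_zero, sin_zero, one_smul, zero_smul, add_zero, ← pow_two]
    rw [integral_fun_fst (fun x => f x ^ 2)]; simp
  have h1 : φ (π / 2) = (∫ x, f x ∂(gaussianMeasureN n)) ^ 2 := by
    simp only [hφ, cos_pi_div_two, sin_pi_div_two, one_smul, zero_smul, zero_add]
    rw [integral_prod_mul, pow_two]
  simp only [h0, h1, cos_zero, cos_pi_div_two] at h
  linarith
end

section
/- The Gaussian logarithmic Sobolev inequality: for every smooth function f on ℝⁿ with f² and |∇f|² integrable against γ_n, ∫ f² log(f²/‖f‖²_{L²(γ_n)}) dγ_n ≤ 2 ∫ |∇f|² dγ_n. -/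
open MeasureTheory Real

open Filter Topology Set ProbabilityTheory

noncomputable abbrev stdPdf : ℝ → ℝ := gaussianPDFReal 0 1

lemma stdPdf_apply (x : ℝ) : stdPdf x = (√(2 * π))⁻¹ * rexp (-x ^ 2 / 2) := by
  simp [stdPdf, gaussianPDFReal]

lemma stdPdf_pos (x : ℝ) : 0 < stdPdf x := gaussianPDFReal_pos _ _ _ one_ne_zero

lemma hasDerivAt_stdPdf (x : ℝ) : HasDerivAt stdPdf (-x * stdPdf x) x := by
  have h : HasDerivAt (fun x : ℝ => (√(2 * π))⁻¹ * rexp (-x ^ 2 / 2))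
      ((√(2 * π))⁻¹ * (rexp (-x ^ 2 / 2) * (-(2 * x) / 2))) x := by
    have := (((hasDerivAt_pow 2 x).neg.div_const 2).exp).const_mul ((√(2 * π))⁻¹)
    simpa using this
  have e : stdPdf = fun x : ℝ => (√(2 * π))⁻¹ * rexp (-x ^ 2 / 2) := funext stdPdf_apply
  rw [e]
  convert h using 1
  ring

lemma continuous_stdPdf : Continuous stdPdf :=
  continuous_iff_continuousAt.2 fun x => (hasDerivAt_stdPdf x).continuousAt

lemma integrable_stdPdf : Integrable stdPdf := integrable_gaussianPDFReal _ _

lemma integral_stdPdf : ∫ x, stdPdf x = 1 := integral_gaussianPDFReal_eq_one _ one_ne_zero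

lemma cdf_hasStrictDerivAt {p : ℝ → ℝ} (hc : Continuous p) (hi : Integrable p) (x : ℝ) :
    HasStrictDerivAt (fun x => ∫ y in Iic x, p y) (p x) x := by
  have h : (fun x => ∫ y in Iic x, p y) =
      fun x => (∫ y in Iic 0, p y) + ∫ y in (0:ℝ)..x, p y := by
    funext z
    rw [← intervalIntegral.integral_Iic_sub_Iic hi.integrableOn hi.integrableOn]
    ring
  rw [h]
  have := intervalIntegral.integral_hasStrictDerivAt_right (a := 0) (b := x)
    (hc.intervalIntegrable _ _) (hc.stronglyMeasurableAtFilter _ _) hc.continuousAt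
  exact this.const_add _

lemma cdf_strictMono {p : ℝ → ℝ} (hc : Continuous p) (hi : Integrable p) (hp : ∀ x, 0 < p x) :
    StrictMono (fun x => ∫ y in Iic x, p y) :=
  strictMono_of_hasDerivAt_pos (fun x => (cdf_hasStrictDerivAt hc hi x).hasDerivAt) hp

lemma cdf_tendsto_top {p : ℝ → ℝ} (hi : Integrable p) :
    Tendsto (fun x => ∫ y in Iic x, p y) atTop (𝓝 (∫ y, p y)) :=
  (aecover_Iic tendsto_id).integral_tendsto_of_countably_generated hi

lemma cdf_tendsto_bot {p : ℝ → ℝ} :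
    Tendsto (fun x => ∫ y in Iic x, p y) atBot (𝓝 0) :=
  tendsto_integral_Iic_zero tendsto_id

lemma cdf_add_tail {p : ℝ → ℝ} (hi : Integrable p) (x : ℝ) :
    (∫ y in Iic x, p y) + ∫ y in Ioi x, p y = ∫ y, p y := by
  have := integral_add_compl (measurableSet_Iic (a := x)) hi
  rwa [compl_Iic] at this

/-- existence of the monotone transport map -/
lemma exists_transport {p q : ℝ → ℝ} (hpc : Continuous p) (hpi : Integrable p)
    (hp : ∀ x, 0 < p x) (hqc : Continuous q) (hqi : Integrable q) (hq : ∀ x, 0 < q x)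
    (hpq : ∫ x, p x = ∫ x, q x) :
    ∃ T : ℝ → ℝ, (∀ x, ∫ y in Iic (T x), q y = ∫ y in Iic x, p y) ∧
      ∀ x, HasDerivAt T (p x / q (T x)) x := by
  set P : ℝ → ℝ := fun x => ∫ y in Iic x, p y with hP
  set Q : ℝ → ℝ := fun x => ∫ y in Iic x, q y with hQ
  have Pm : StrictMono P := cdf_strictMono hpc hpi hp
  have Qm : StrictMono Q := cdf_strictMono hqc hqi hq
  have Qc : Continuous Q := continuous_iff_continuousAt.2
    fun x => (cdf_hasStrictDerivAt hqc hqi x).hasDerivAt.continuousAt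
  have key : ∀ x, ∃ t, Q t = P x := by
    intro x
    have h0 : 0 < P x := by
      have h1 : 0 ≤ P (x - 1) := setIntegral_nonneg measurableSet_Iic fun y _ => (hp y).le
      have h2 : P (x - 1) < P x := Pm (by linarith)
      linarith
    have h1 : P x < ∫ y, q y := by
      have h2 : P x < P (x + 1) := Pm (by linarith)
      have h3 : P (x + 1) ≤ ∫ y, p y :=
        setIntegral_le_integral hpi (Eventually.of_forall fun y => (hp y).le)
      linarith
    obtain ⟨a, ha⟩ := ((cdf_tendsto_bot (p := q)).eventually (gt_mem_nhds h0)).exists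
    obtain ⟨b, hb⟩ := ((cdf_tendsto_top hqi).eventually (lt_mem_nhds h1)).exists
    exact mem_range_of_exists_le_of_exists_ge Qc ⟨a, ha.le⟩ ⟨b, hb.le⟩
  choose T hT using key
  refine ⟨T, hT, fun x => ?_⟩
  have hs : HasStrictDerivAt Q (q (T x)) (T x) := cdf_hasStrictDerivAt hqc hqi (T x)
  have hne : q (T x) ≠ 0 := (hq _).ne'
  have hPd : HasDerivAt P (p x) x := (cdf_hasStrictDerivAt hpc hpi x).hasDerivAt
  have h1 := (hs.to_localInverse hne).hasDerivAt
  have h2 := hs.eventually_right_inverse hne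
  rw [hT] at h1 h2
  have h3 := h1.comp x hPd
  have h4 : T =ᶠ[𝓝 x] (hs.localInverse Q (q (T x)) (T x) hne) ∘ P := by
    filter_upwards [hPd.continuousAt.eventually h2] with y hy
    apply Qm.injective
    rw [hT, Function.comp_apply, hy]
  rw [div_eq_inv_mul]
  exact h3.congr_of_eventuallyEq h4

lemma tail_right (x a : ℝ) (hx : 0 ≤ x) (ha : 0 ≤ a) :
    ∫ y in Ioi (x + a), stdPdf y ≤ rexp (-a ^ 2 / 2) * ∫ y in Ioi x, stdPdf y := by
  have h : ∫ y in Ioi (x + a), stdPdf y = ∫ y in Ioi x, stdPdf (y + a) := by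
    have := (measurePreserving_add_right volume a).setIntegral_preimage_emb
      (measurableEmbedding_addRight a) stdPdf (Ioi (x + a))
    rw [← this]
    simp
  rw [h, ← integral_const_mul]
  refine setIntegral_mono_on (integrable_stdPdf.comp_add_right a).integrableOn
    (integrable_stdPdf.const_mul _).integrableOn measurableSet_Ioi fun y hy => ?_
  have hy : x < y := hy
  rw [stdPdf_apply, stdPdf_apply, mul_left_comm, ← Real.exp_add]
  gcongr
  nlinarith [mul_nonneg ha (hx.trans hy.le)]

lemma tail_left (x a : ℝ) (hx : x ≤ 0) (ha : 0 ≤ a) :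
    ∫ y in Iic (x - a), stdPdf y ≤ rexp (-a ^ 2 / 2) * ∫ y in Iic x, stdPdf y := by
  have h : ∫ y in Iic (x - a), stdPdf y = ∫ y in Iic x, stdPdf (y - a) := by
    have := (measurePreserving_sub_right volume a).setIntegral_preimage_emb
      (measurableEmbedding_subRight a) stdPdf (Iic (x - a))
    rw [← this]
    simp
  rw [h, ← integral_const_mul]
  refine setIntegral_mono_on (integrable_stdPdf.comp_sub_right a).integrableOn
    (integrable_stdPdf.const_mul _).integrableOn measurableSet_Iic fun y hy => ?_
  have hy : y ≤ x := hy
  rw [stdPdf_apply, stdPdf_apply, mul_left_comm, ← Real.exp_add]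
  gcongr
  nlinarith [mul_nonneg ha (neg_nonneg.2 (hy.trans hx))]

lemma stdPdf_tendsto_top : Tendsto stdPdf atTop (𝓝 0) := by
  have e : stdPdf = fun x : ℝ => (√(2 * π))⁻¹ * rexp (-(x ^ 2 / 2)) := by
    funext x; rw [stdPdf_apply]; ring_nf
  rw [e, show (0:ℝ) = (√(2 * π))⁻¹ * 0 by simp]
  refine Tendsto.const_mul _ (tendsto_exp_neg_atTop_nhds_zero.comp ?_)
  exact (tendsto_pow_atTop two_ne_zero).atTop_div_const (by norm_num)

lemma stdPdf_neg (x : ℝ) : stdPdf (-x) = stdPdf x := by simp [stdPdf_apply]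

/-- one-dimensional inequality in integral form -/
lemma oneDim {g g' : ℝ → ℝ} {ε M K : ℝ} (hε : 0 < ε) (hg : ∀ x, HasDerivAt g (g' x) x)
    (hg'c : Continuous g') (h0 : ∀ x, ε ≤ g x) (h1 : ∀ x, g x ≤ M) (h2 : ∀ x, |g' x| ≤ K) :
    ∫ x, stdPdf x * (g x * log (g x / ∫ y, stdPdf y * g y) - g' x ^ 2 / (2 * g x)) ≤ 0 := by
  have hgc : Continuous g := continuous_iff_continuousAt.2 fun x => (hg x).continuousAt
  have gpos : ∀ x, 0 < g x := fun x => hε.trans_le (h0 x)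
  have Mpos : 0 < M := (gpos 0).trans_le (h1 0)
  set m := ∫ y, stdPdf y * g y with hm
  have hpi : Integrable (fun y => stdPdf y * g y) := by
    refine integrable_stdPdf.mul_bdd (c := M) hgc.aestronglyMeasurable
      (Eventually.of_forall fun x => ?_)
    rw [Real.norm_eq_abs, abs_of_pos (gpos x)]; exact h1 x
  have hmε : ε ≤ m := by
    have : ∫ y, stdPdf y * ε ≤ m :=
      integral_mono (integrable_stdPdf.mul_const _) hpi fun x =>
        mul_le_mul_of_nonneg_left (h0 x) (stdPdf_pos x).le
    rwa [integral_mul_const, integral_stdPdf, one_mul] at this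
  have mpos : 0 < m := hε.trans_le hmε
  have hqi : Integrable (fun y => m * stdPdf y) := integrable_stdPdf.const_mul _
  obtain ⟨T, hT, hTd⟩ := exists_transport (p := fun y => stdPdf y * g y)
    (q := fun y => m * stdPdf y) (continuous_stdPdf.mul hgc) hpi
    (fun x => mul_pos (stdPdf_pos x) (gpos x)) (continuous_stdPdf.const_mul _) hqi
    (fun x => mul_pos mpos (stdPdf_pos x)) (by
      rw [integral_const_mul, integral_stdPdf, mul_one])
  obtain ⟨a, ha, haε⟩ : ∃ a : ℝ, 0 ≤ a ∧ m * rexp (-a ^ 2 / 2) ≤ ε := by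
    have e : Tendsto (fun x : ℝ => m * rexp (-(x ^ 2 / 2))) atTop (𝓝 (m * 0)) := by
      refine Tendsto.const_mul _ (tendsto_exp_neg_atTop_nhds_zero.comp ?_)
      exact (tendsto_pow_atTop two_ne_zero).atTop_div_const (by norm_num)
    rw [mul_zero] at e
    obtain ⟨a, h, h'⟩ := ((e.eventually (gt_mem_nhds hε)).and (eventually_ge_atTop 0)).exists
    exact ⟨a, h', by rw [neg_div]; exact h.le⟩
  have Φm : StrictMono (fun x => ∫ y in Iic x, stdPdf y) :=
    cdf_strictMono continuous_stdPdf integrable_stdPdf stdPdf_pos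
  have left : ∀ x ≤ 0, x - a ≤ T x := by
    intro x hx
    rw [← Φm.le_iff_le]
    have t := tail_left x a hx ha
    have hTx := hT x
    rw [integral_const_mul] at hTx
    have : ε * ∫ y in Iic x, stdPdf y ≤ ∫ y in Iic x, stdPdf y * g y := by
      rw [← integral_const_mul]
      refine setIntegral_mono_on (integrable_stdPdf.const_mul _).integrableOn hpi.integrableOn
        measurableSet_Iic fun y _ => ?_
      rw [mul_comm]
      exact mul_le_mul_of_nonneg_left (h0 y) (stdPdf_pos y).le
    have nn : 0 ≤ ∫ y in Iic x, stdPdf y :=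
      setIntegral_nonneg measurableSet_Iic fun y _ => (stdPdf_pos y).le
    have := mul_le_mul_of_nonneg_right haε nn
    have := mul_le_mul_of_nonneg_left t mpos.le
    refine le_of_mul_le_mul_left ?_ mpos
    linarith
  have right : ∀ x, 0 ≤ x → T x ≤ x + a := by
    intro x hx
    rw [← Φm.le_iff_le]
    have t := tail_right x a hx ha
    have hTx := hT x
    rw [integral_const_mul] at hTx
    have : ε * ∫ y in Ioi x, stdPdf y ≤ ∫ y in Ioi x, stdPdf y * g y := by
      rw [← integral_const_mul]
      refine setIntegral_mono_on (integrable_stdPdf.const_mul _).integrableOn hpi.integrableOn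
        measurableSet_Ioi fun y _ => ?_
      rw [mul_comm]
      exact mul_le_mul_of_nonneg_left (h0 y) (stdPdf_pos y).le
    have nn : 0 ≤ ∫ y in Ioi x, stdPdf y :=
      setIntegral_nonneg measurableSet_Ioi fun y _ => (stdPdf_pos y).le
    have := mul_le_mul_of_nonneg_right haε nn
    have := mul_le_mul_of_nonneg_left t mpos.le
    have e1 := cdf_add_tail hpi x
    have e2 := cdf_add_tail integrable_stdPdf (x + a)
    rw [integral_stdPdf] at e2
    refine le_of_mul_le_mul_left ?_ mpos
    have e3 : ∫ y in Iic (x + a), stdPdf y = 1 - ∫ y in Ioi (x + a), stdPdf y := by linarith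
    rw [e3, mul_sub]
    linarith
  set A : ℝ → ℝ := fun x => stdPdf x * (g x * log (g x / m) - g' x ^ 2 / (2 * g x)) with hA
  have hAc : Continuous A := by
    refine continuous_stdPdf.mul ((hgc.mul ((hgc.div_const _).log fun x => ?_)).sub
      ((hg'c.pow 2).div (hgc.const_mul 2) fun x => ?_))
    · exact (div_pos (gpos x) mpos).ne'
    · have := gpos x; positivity
  set L := max |log (ε / m)| |log (M / m)|
  have hAi : Integrable A := by
    refine integrable_stdPdf.mul_bdd (c := M * L + K ^ 2 / (2 * ε)) (Continuous.aestronglyMeasurable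
      ((hgc.mul ((hgc.div_const _).log fun x => ?_)).sub
      ((hg'c.pow 2).div (hgc.const_mul 2) fun x => ?_)))
      (Eventually.of_forall fun x => ?_)
    · exact (div_pos (gpos x) mpos).ne'
    · have := gpos x; positivity
    · refine (norm_sub_le _ _).trans (add_le_add ?_ ?_)
      · rw [norm_mul, Real.norm_eq_abs, Real.norm_eq_abs, abs_of_pos (gpos x)]
        refine mul_le_mul (h1 x) ?_ (abs_nonneg _) Mpos.le
        refine abs_le_max_abs_abs ?_ ?_
        · exact log_le_log (by positivity) (by have := h0 x; gcongr)
        · exact log_le_log (div_pos (gpos x) mpos) (by have := h1 x; gcongr)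
      · have := gpos x
        rw [Real.norm_eq_abs, abs_of_nonneg (by positivity), ← sq_abs (g' x)]
        have := h0 x
        have := h2 x
        gcongr
  set B : ℝ → ℝ := fun x => (T x - x) * (stdPdf x * g x) with hB
  have hBd : ∀ x, HasDerivAt B ((stdPdf x * g x / (m * stdPdf (T x)) - 1) * (stdPdf x * g x) +
      (T x - x) * (-x * stdPdf x * g x + stdPdf x * g' x)) x := fun x =>
    ((hTd x).sub (hasDerivAt_id x)).mul ((hasDerivAt_stdPdf x).mul (hg x))
  have hpt : ∀ x, A x ≤ (stdPdf x * g x / (m * stdPdf (T x)) - 1) * (stdPdf x * g x) +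
      (T x - x) * (-x * stdPdf x * g x + stdPdf x * g' x) := by
    intro x
    set D := stdPdf x * g x / (m * stdPdf (T x)) with hD
    have hφ := stdPdf_pos x
    have hφT := stdPdf_pos (T x)
    have hgx := gpos x
    have Dpos : 0 < D := by positivity
    have e1 : g x / m = D * rexp (x ^ 2 / 2 - T x ^ 2 / 2) := by
      have : stdPdf (T x) = stdPdf x * rexp (x ^ 2 / 2 - T x ^ 2 / 2) := by
        rw [stdPdf_apply, stdPdf_apply, mul_assoc, ← Real.exp_add]
        ring_nf
      rw [hD, this]
      field_simp
    have e2 : log (g x / m) = log D + (x ^ 2 / 2 - T x ^ 2 / 2) := by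
      rw [e1, log_mul Dpos.ne' (exp_pos _).ne', log_exp]
    have e3 : log D ≤ D - 1 := log_le_sub_one_of_pos Dpos
    have e4 : 0 ≤ g' x ^ 2 / (2 * g x) + (T x - x) * g' x + g x * (T x - x) ^ 2 / 2 := by
      have : g' x ^ 2 / (2 * g x) + (T x - x) * g' x + g x * (T x - x) ^ 2 / 2 =
        (g' x + g x * (T x - x)) ^ 2 / (2 * g x) := by field_simp; ring
      rw [this]; positivity
    have e5 := mul_le_mul_of_nonneg_left e3 hgx.le
    simp only [hA]
    rw [e2]
    have : g x * (log D + (x ^ 2 / 2 - T x ^ 2 / 2)) - g' x ^ 2 / (2 * g x) ≤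
      (D - 1) * g x + (T x - x) * (- x * g x + g' x) := by nlinarith
    calc _ ≤ stdPdf x * ((D - 1) * g x + (T x - x) * (- x * g x + g' x)) :=
          mul_le_mul_of_nonneg_left this hφ.le
      _ = _ := by ring
  have hBc : Continuous B := continuous_iff_continuousAt.2 fun x => (hBd x).continuousAt
  have hint : ∀ R : ℝ, 0 ≤ R → ∫ x in (-R)..R, A x ≤ 2 * (a * M) * stdPdf R := by
    intro R hR
    have h := intervalIntegral.integral_le_sub_of_hasDeriv_right_of_le (a := -R) (b := R)
      (by linarith) hBc.continuousOn (fun x _ => (hBd x).hasDerivWithinAt)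
      hAi.integrableOn (fun x _ => hpt x)
    refine h.trans ?_
    have l := left (-R) (by linarith)
    have r := right R hR
    have hφ := stdPdf_pos R
    have b1 : B R ≤ a * (stdPdf R * M) := by
      have h1R := h1 R
      have := gpos R
      calc B R ≤ a * (stdPdf R * g R) :=
            mul_le_mul_of_nonneg_right (by linarith) (by positivity)
        _ ≤ _ := by gcongr
    have b2 : -B (-R) ≤ a * (stdPdf R * M) := by
      have h1R := h1 (-R)
      have := gpos (-R)
      calc -B (-R) = (-R - T (-R)) * (stdPdf R * g (-R)) := by
            simp only [hB, stdPdf_neg]; ring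
        _ ≤ a * (stdPdf R * g (-R)) :=
            mul_le_mul_of_nonneg_right (by linarith) (by positivity)
        _ ≤ _ := by gcongr
    linarith
  have lim1 : Tendsto (fun R : ℝ => ∫ x in (-R)..R, A x) atTop (𝓝 (∫ x, A x)) :=
    intervalIntegral_tendsto_integral hAi tendsto_neg_atTop_atBot tendsto_id
  have lim2 : Tendsto (fun R : ℝ => 2 * (a * M) * stdPdf R) atTop (𝓝 (2 * (a * M) * 0)) :=
    stdPdf_tendsto_top.const_mul _
  rw [mul_zero] at lim2
  exact le_of_tendsto_of_tendsto lim1 lim2 ((eventually_ge_atTop 0).mono hint)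

structure NiceFn {E : Type*} [NormedAddCommGroup E] [NormedSpace ℝ E] (g : E → ℝ)
    (ε M K : ℝ) : Prop where
  smooth : ContDiff ℝ 1 g
  pos : 0 < ε
  lower : ∀ x, ε ≤ g x
  upper : ∀ x, g x ≤ M
  deriv : ∀ x, ‖fderiv ℝ g x‖ ≤ K

def GLSI {E : Type*} [NormedAddCommGroup E] [NormedSpace ℝ E] [MeasurableSpace E]
    (μ : Measure E) {ι : Type*} [Fintype ι] (V : ι → E) : Prop :=
  ∀ (g : E → ℝ) (ε M K : ℝ), NiceFn g ε M K →
    ∫ x, g x * log (g x) ∂μ - (∫ x, g x ∂μ) * log (∫ x, g x ∂μ) ≤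
      1 / 2 * ∫ x, ∑ i, (fderiv ℝ g x (V i)) ^ 2 / g x ∂μ

lemma integrable_of_cont_bdd {E : Type*} [TopologicalSpace E] [MeasurableSpace E]
    [OpensMeasurableSpace E]
    {μ : Measure E} [IsFiniteMeasure μ] {h : E → ℝ} (hc : Continuous h) {C : ℝ}
    (hb : ∀ x, |h x| ≤ C) : Integrable h μ :=
  Integrable.of_bound hc.aestronglyMeasurable C (Eventually.of_forall hb)

section nice
variable {E : Type*} [NormedAddCommGroup E] [NormedSpace ℝ E] {g : E → ℝ} {ε M K : ℝ}

lemma NiceFn.gpos (h : NiceFn g ε M K) (x : E) : 0 < g x := h.pos.trans_le (h.lower x)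

lemma NiceFn.Mpos (h : NiceFn g ε M K) : 0 < M := (h.gpos 0).trans_le (h.upper 0)

lemma NiceFn.cont (h : NiceFn g ε M K) : Continuous g := h.smooth.continuous

lemma NiceFn.contD (h : NiceFn g ε M K) : Continuous (fderiv ℝ g) :=
  h.smooth.continuous_fderiv one_ne_zero

lemma NiceFn.hasD (h : NiceFn g ε M K) (x : E) : HasFDerivAt g (fderiv ℝ g x) x :=
  (h.smooth.differentiable one_ne_zero x).hasFDerivAt

lemma NiceFn.gabs (h : NiceFn g ε M K) (x : E) : |g x| ≤ M := by
  rw [abs_of_pos (h.gpos x)]; exact h.upper x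

lemma NiceFn.cont_log (h : NiceFn g ε M K) : Continuous fun x => g x * log (g x) :=
  h.cont.mul (h.cont.log fun x => (h.gpos x).ne')

lemma NiceFn.log_bd (h : NiceFn g ε M K) (x : E) :
    |g x * log (g x)| ≤ M * max |log ε| |log M| := by
  rw [abs_mul]
  refine mul_le_mul (h.gabs x) ?_ (abs_nonneg _) h.Mpos.le
  exact abs_le_max_abs_abs (log_le_log h.pos (h.lower x)) (log_le_log (h.gpos x) (h.upper x))

lemma NiceFn.cont_dir (h : NiceFn g ε M K) (v : E) : Continuous fun x => fderiv ℝ g x v :=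
  h.contD.clm_apply continuous_const

lemma NiceFn.dir_bd (h : NiceFn g ε M K) (v : E) (x : E) : |fderiv ℝ g x v| ≤ K * ‖v‖ :=
  (ContinuousLinearMap.le_opNorm _ _).trans
    (mul_le_mul_of_nonneg_right (h.deriv x) (norm_nonneg _))

lemma NiceFn.cont_fisher (h : NiceFn g ε M K) (v : E) :
    Continuous fun x => (fderiv ℝ g x v) ^ 2 / g x :=
  ((h.cont_dir v).pow 2).div h.cont fun x => (h.gpos x).ne'

lemma NiceFn.fisher_bd (h : NiceFn g ε M K) (v : E) (x : E) :
    |(fderiv ℝ g x v) ^ 2 / g x| ≤ (K * ‖v‖) ^ 2 / ε := by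
  have h1 := h.gpos x
  have h2 := h.pos
  have h3 := h.lower x
  have h4 := h.dir_bd v x
  rw [abs_of_nonneg (by positivity), ← sq_abs]
  gcongr

end nice

lemma GLSI.map {E F : Type*} [NormedAddCommGroup E] [NormedSpace ℝ E] [MeasurableSpace E]
    [BorelSpace E] [NormedAddCommGroup F] [NormedSpace ℝ F] [MeasurableSpace F] [BorelSpace F]
    [SecondCountableTopology F]
    {μ : Measure E} {ι : Type*} [Fintype ι] {V : ι → E} (h : GLSI μ V) (L : E →L[ℝ] F) :
    GLSI (μ.map L) (fun i => L (V i)) := by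
  intro g ε M K hg
  have hd : ∀ x, fderiv ℝ (fun x => g (L x)) x = (fderiv ℝ g (L x)).comp L := fun x =>
    ((hg.hasD (L x)).comp x L.hasFDerivAt).fderiv
  have hn : NiceFn (fun x => g (L x)) ε M (K * ‖L‖) :=
    ⟨hg.smooth.comp L.contDiff, hg.pos, fun x => hg.lower _, fun x => hg.upper _, fun x => by
      rw [hd]
      exact (ContinuousLinearMap.opNorm_comp_le _ _).trans
        (mul_le_mul_of_nonneg_right (hg.deriv _) (norm_nonneg _))⟩
  have := h _ _ _ _ hn
  rw [integral_map L.continuous.aemeasurable hg.cont_log.aestronglyMeasurable,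
    integral_map L.continuous.aemeasurable hg.cont.aestronglyMeasurable,
    integral_map L.continuous.aemeasurable
      (continuous_finsetSum _ fun i _ => hg.cont_fisher (L (V i))).aestronglyMeasurable]
  simpa [hd] using this

lemma glsi_gaussianReal : GLSI (gaussianReal 0 1) (fun _ : Unit => (1 : ℝ)) := by
  intro g ε M K hg
  have hd : ∀ x, HasDerivAt g (fderiv ℝ g x 1) x := fun x => by
    have := (hg.hasD x).hasDerivAt
    exact this
  have key := oneDim hg.pos hd (hg.cont_dir 1) hg.lower hg.upper
    (fun x => hg.dir_bd 1 x)
  have e : ∀ h : ℝ → ℝ, ∫ x, stdPdf x * h x = ∫ x, h x ∂(gaussianReal 0 1) := fun h => by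
    rw [integral_gaussianReal_eq_integral_smul one_ne_zero]; rfl
  rw [e, e] at key
  set m := ∫ x, g x ∂(gaussianReal 0 1)
  have i1 : Integrable (fun x => g x * log (g x)) (gaussianReal 0 1) :=
    integrable_of_cont_bdd hg.cont_log hg.log_bd
  have i2 : Integrable g (gaussianReal 0 1) := integrable_of_cont_bdd hg.cont hg.gabs
  have i3 : Integrable (fun x => (fderiv ℝ g x 1) ^ 2 / g x) (gaussianReal 0 1) :=
    integrable_of_cont_bdd (hg.cont_fisher 1) (hg.fisher_bd 1)
  have mpos : 0 < m := by
    have : ∫ x, ε ∂(gaussianReal 0 1) ≤ m := integral_mono (integrable_const _) i2 hg.lower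
    simp at this
    exact hg.pos.trans_le this
  have e2 : ∀ x, g x * log (g x / m) - (fderiv ℝ g x 1) ^ 2 / (2 * g x) =
      g x * log (g x) - g x * log m - 1 / 2 * ((fderiv ℝ g x 1) ^ 2 / g x) := fun x => by
    have := hg.gpos x
    rw [log_div this.ne' mpos.ne']
    field_simp
  simp_rw [e2] at key
  have i4 : Integrable (fun x => g x * log (g x) - g x * log m) (gaussianReal 0 1) :=
    i1.sub (i2.mul_const _)
  rw [integral_sub i4 (i3.const_mul _), integral_sub i1 (i2.mul_const _),
    integral_mul_const, integral_const_mul] at key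
  simp only [Finset.univ_unique, Finset.sum_singleton]
  linarith

lemma GLSI.prod {E F : Type*} [NormedAddCommGroup E] [NormedSpace ℝ E] [MeasurableSpace E]
    [BorelSpace E] [NormedAddCommGroup F] [NormedSpace ℝ F] [MeasurableSpace F] [BorelSpace F]
    [SecondCountableTopology F] [SecondCountableTopology E] [FiniteDimensional ℝ F]
    {μ : Measure E} {ν : Measure F} [IsProbabilityMeasure μ] [IsProbabilityMeasure ν]
    {ι κ : Type*} [Fintype ι] [Fintype κ] {V : ι → E} {W : κ → F}
    (hμ : GLSI μ V) (hν : GLSI ν W) :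
    GLSI (μ.prod ν) (Sum.elim (fun i => ((V i, 0) : E × F)) (fun j => (0, W j))) := by
  intro g ε M K hg
  have Kpos : 0 ≤ K := (norm_nonneg _).trans (hg.deriv 0)
  have dslice1 : ∀ (y : F) (x : E), HasFDerivAt (fun x => g (x, y))
      ((fderiv ℝ g (x, y)).comp (ContinuousLinearMap.inl ℝ E F)) x := fun y x =>
    (hg.hasD (x, y)).comp x (hasFDerivAt_prodMk_left x y)
  have dslice2 : ∀ (y : F) (x : E), HasFDerivAt (fun y => g (x, y))
      ((fderiv ℝ g (x, y)).comp (ContinuousLinearMap.inr ℝ E F)) y := fun y x =>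
    (hg.hasD (x, y)).comp y (hasFDerivAt_prodMk_right x y)
  have nb1 : ∀ p, ‖(fderiv ℝ g p).comp (ContinuousLinearMap.inl ℝ E F)‖ ≤ K := fun p => by
    refine (ContinuousLinearMap.opNorm_comp_le _ _).trans ?_
    calc _ ≤ K * 1 := mul_le_mul (hg.deriv p)
          (ContinuousLinearMap.norm_inl_le_one ℝ E F) (norm_nonneg _) Kpos
      _ = K := mul_one K
  have nb2 : ∀ p, ‖(fderiv ℝ g p).comp (ContinuousLinearMap.inr ℝ E F)‖ ≤ K := fun p => by
    refine (ContinuousLinearMap.opNorm_comp_le _ _).trans ?_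
    calc _ ≤ K * 1 := mul_le_mul (hg.deriv p)
          (ContinuousLinearMap.norm_inr_le_one ℝ E F) (norm_nonneg _) Kpos
      _ = K := mul_one K
  have n1 : ∀ y, NiceFn (fun x => g (x, y)) ε M K := fun y =>
    ⟨hg.smooth.comp (contDiff_prodMk_left y), hg.pos, fun x => hg.lower _, fun x => hg.upper _,
      fun x => by rw [(dslice1 y x).fderiv]; exact nb1 _⟩
  set h : F → ℝ := fun y => ∫ x, g (x, y) ∂μ with hh
  set H' : F → F →L[ℝ] ℝ := fun y =>
    ∫ x, (fderiv ℝ g (x, y)).comp (ContinuousLinearMap.inr ℝ E F) ∂μ with hH'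
  have contD2 : Continuous fun p : E × F =>
      (fderiv ℝ g p).comp (ContinuousLinearMap.inr ℝ E F) :=
    hg.contD.clm_comp continuous_const
  have hD : ∀ y, HasFDerivAt h (H' y) y := fun y => by
    refine hasFDerivAt_integral_of_dominated_of_fderiv_le (s := univ) (bound := fun _ => K)
      (F := fun y x => g (x, y))
      (F' := fun y x => (fderiv ℝ g (x, y)).comp (ContinuousLinearMap.inr ℝ E F))
      univ_mem ?_ ?_ ?_ ?_ ?_ ?_
    · exact Eventually.of_forall fun z => (n1 z).cont.aestronglyMeasurable
    · exact integrable_of_cont_bdd (n1 y).cont (n1 y).gabs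
    · exact (contD2.comp (Continuous.prodMk_left y)).aestronglyMeasurable
    · exact Eventually.of_forall fun x z _ => nb2 _
    · exact integrable_const _
    · exact Eventually.of_forall fun x z _ => dslice2 z x
  have hH'c : Continuous H' := by
    refine continuous_of_dominated (bound := fun _ => K) ?_ ?_ (integrable_const _) ?_
    · exact fun y => (contD2.comp (Continuous.prodMk_left y)).aestronglyMeasurable
    · exact fun y => Eventually.of_forall fun x => nb2 _
    · exact Eventually.of_forall fun x => contD2.comp (Continuous.prodMk_right x)
  have hfd : fderiv ℝ h = H' := funext fun y => (hD y).fderiv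
  have ig : ∀ y, Integrable (fun x => g (x, y)) μ := fun y =>
    integrable_of_cont_bdd (n1 y).cont (n1 y).gabs
  have nh : NiceFn h ε M K := by
    refine ⟨?_, hg.pos, fun y => ?_, fun y => ?_, fun y => ?_⟩
    · rw [contDiff_one_iff_fderiv, hfd]
      exact ⟨fun y => (hD y).differentiableAt, hH'c⟩
    · have : ∫ x, ε ∂μ ≤ h y := integral_mono (integrable_const _) (ig y) fun x => hg.lower _
      simpa using this
    · have : h y ≤ ∫ x, M ∂μ := integral_mono (ig y) (integrable_const _) fun x => hg.upper _
      simpa using this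
    · rw [hfd]
      have := norm_integral_le_of_norm_le_const (μ := μ)
        (Eventually.of_forall fun x : E => nb2 (x, y))
      simpa using this
  have j1 : Integrable (fun p => g p * log (g p)) (μ.prod ν) :=
    integrable_of_cont_bdd hg.cont_log hg.log_bd
  have j2 : Integrable g (μ.prod ν) := integrable_of_cont_bdd hg.cont hg.gabs
  have j3 : ∀ v : E × F, Integrable (fun p => (fderiv ℝ g p v) ^ 2 / g p) (μ.prod ν) := fun v =>
    integrable_of_cont_bdd (hg.cont_fisher v) (hg.fisher_bd v)
  have k1 : Integrable (fun y => h y * log (h y)) ν :=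
    integrable_of_cont_bdd nh.cont_log nh.log_bd
  have eh : ∫ p, g p ∂(μ.prod ν) = ∫ y, h y ∂ν := integral_prod_symm _ j2
  have el : ∫ p, g p * log (g p) ∂(μ.prod ν) = ∫ y, ∫ x, g (x, y) * log (g (x, y)) ∂μ ∂ν :=
    integral_prod_symm _ j1
  have e3 : ∀ v : E × F, ∫ p, (fderiv ℝ g p v) ^ 2 / g p ∂(μ.prod ν) =
      ∫ y, ∫ x, (fderiv ℝ g (x, y) v) ^ 2 / g (x, y) ∂μ ∂ν := fun v =>
    integral_prod_symm _ (j3 v)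
  have l1 : Integrable (fun y => ∫ x, g (x, y) * log (g (x, y)) ∂μ) ν := j1.integral_prod_right
  have l3 : ∀ v : E × F,
      Integrable (fun y => ∫ x, (fderiv ℝ g (x, y) v) ^ 2 / g (x, y) ∂μ) ν := fun v =>
    (j3 v).integral_prod_right
  have j3s : ∀ (v : E × F) (y : F),
      Integrable (fun x => (fderiv ℝ g (x, y) v) ^ 2 / g (x, y)) μ := fun v y =>
    integrable_of_cont_bdd ((hg.cont_fisher v).comp (Continuous.prodMk_left y))
      (fun x => hg.fisher_bd v (x, y))
  have jd : ∀ (v : E × F) (y : F), Integrable (fun x => fderiv ℝ g (x, y) v) μ := fun v y =>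
    integrable_of_cont_bdd ((hg.cont_dir v).comp (Continuous.prodMk_left y))
      (fun x => hg.dir_bd v (x, y))
  have s1 : ∀ y, ∫ x, g (x, y) * log (g (x, y)) ∂μ ≤ h y * log (h y) +
      1 / 2 * ∑ i, ∫ x, (fderiv ℝ g (x, y) (V i, 0)) ^ 2 / g (x, y) ∂μ := fun y => by
    have := hμ _ _ _ _ (n1 y)
    simp_rw [fun x => (dslice1 y x).fderiv] at this
    simp only [ContinuousLinearMap.comp_apply, ContinuousLinearMap.inl_apply] at this
    rw [integral_finsetSum _ fun i _ => j3s (V i, 0) y] at this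
    linarith
  have s1' : ∫ y, ∫ x, g (x, y) * log (g (x, y)) ∂μ ∂ν ≤ ∫ y, h y * log (h y) ∂ν +
      1 / 2 * ∑ i, ∫ p, (fderiv ℝ g p (V i, 0)) ^ 2 / g p ∂(μ.prod ν) := by
    have ii : Integrable (fun y =>
        ∑ i, ∫ x, (fderiv ℝ g (x, y) (V i, 0)) ^ 2 / g (x, y) ∂μ) ν :=
      integrable_finsetSum _ fun i _ => l3 (V i, 0)
    have := integral_mono l1 (k1.add (ii.const_mul (1 / 2))) s1
    refine this.trans_eq ?_
    simp only [Pi.add_apply]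
    rw [integral_add k1 (ii.const_mul _), integral_const_mul,
      integral_finsetSum _ fun i _ => l3 (V i, 0)]
    simp_rw [e3]
  have s2 : ∀ (w : F) (y : F), (fderiv ℝ h y w) ^ 2 / h y ≤
      ∫ x, (fderiv ℝ g (x, y) (0, w)) ^ 2 / g (x, y) ∂μ := fun w y => by
    have ea : fderiv ℝ h y w = ∫ x, fderiv ℝ g (x, y) (0, w) ∂μ := by
      rw [hfd]
      simp only [hH']
      rw [ContinuousLinearMap.integral_apply]
      · simp
      · exact Integrable.of_bound
          (contD2.comp (Continuous.prodMk_left y)).aestronglyMeasurable K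
          (Eventually.of_forall fun x => nb2 _)
    set a := fderiv ℝ h y w
    have hy := nh.gpos y
    set l := a / h y with hl
    have : ∫ x, (2 * l * fderiv ℝ g (x, y) (0, w) - l ^ 2 * g (x, y)) ∂μ ≤
        ∫ x, (fderiv ℝ g (x, y) (0, w)) ^ 2 / g (x, y) ∂μ := by
      refine integral_mono (((jd (0, w) y).const_mul _).sub ((ig y).const_mul _))
        (j3s (0, w) y) fun x => ?_
      have hp := hg.gpos (x, y)
      simp only
      rw [le_div_iff₀ hp]
      nlinarith [sq_nonneg (fderiv ℝ g (x, y) (0, w) - l * g (x, y))]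
    rw [integral_sub ((jd (0, w) y).const_mul _) ((ig y).const_mul _), integral_const_mul,
      integral_const_mul, ← ea] at this
    refine le_trans (le_of_eq ?_) this
    change a ^ 2 / h y = 2 * l * a - l ^ 2 * h y
    rw [hl]
    field_simp
    ring
  have s2' := hν _ _ _ _ nh
  have s3 : ∫ y, ∑ j, (fderiv ℝ h y (W j)) ^ 2 / h y ∂ν ≤
      ∑ j, ∫ p, (fderiv ℝ g p (0, W j)) ^ 2 / g p ∂(μ.prod ν) := by
    rw [integral_finsetSum _ fun j _ =>
      integrable_of_cont_bdd (nh.cont_fisher (W j)) (nh.fisher_bd (W j))]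
    refine Finset.sum_le_sum fun j _ => ?_
    rw [e3]
    exact integral_mono (integrable_of_cont_bdd (nh.cont_fisher (W j)) (nh.fisher_bd (W j)))
      (l3 _) (s2 (W j))
  rw [integral_finsetSum _ fun i _ => j3 _, Fintype.sum_sum_type, eh, el]
  simp only [Sum.elim_inl, Sum.elim_inr]
  linarith

lemma glsi_pi (n : ℕ) : GLSI (Measure.pi (fun _ : Fin n => gaussianReal 0 1))
    (fun i : Fin n => (Pi.single i 1 : Fin n → ℝ)) := by
  induction n with
  | zero =>
    intro g ε M K hg
    have : ∀ x : Fin 0 → ℝ, g x = g 0 := fun x => by rw [Subsingleton.elim x 0]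
    simp_rw [this]
    simp
  | succ n ih =>
    have h := GLSI.prod glsi_gaussianReal ih
    let L : (ℝ × (Fin n → ℝ)) →L[ℝ] (Fin (n + 1) → ℝ) :=
      LinearMap.toContinuousLinearMap
      { toFun := fun p => Fin.cons p.1 p.2
        map_add' := fun p q => by
          ext i; refine Fin.cases ?_ (fun j => ?_) i <;> simp
        map_smul' := fun c p => by
          ext i; refine Fin.cases ?_ (fun j => ?_) i <;> simp }
    have hL : ∀ p, L p = Fin.cons p.1 p.2 := fun p => rfl
    have h' := h.map L
    have e : ((gaussianReal 0 1).prod (Measure.pi (fun _ : Fin n => gaussianReal 0 1))).map L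
        = Measure.pi (fun _ : Fin (n + 1) => gaussianReal 0 1) := by
      have := (measurePreserving_piFinSuccAbove (fun _ : Fin (n + 1) => gaussianReal 0 1) 0).symm
      rw [← this.map_eq]
      congr 1
      funext p
      rw [hL]
      simp [MeasurableEquiv.piFinSuccAbove, Fin.insertNthEquiv]
    rw [e] at h'
    intro g ε M K hg
    have := h' g ε M K hg
    simp only [Fintype.sum_sum_type, Sum.elim_inl, Sum.elim_inr, Finset.univ_unique,
      Finset.sum_singleton, hL] at this
    have e0 : (Fin.cons 1 0 : Fin (n + 1) → ℝ) = Pi.single 0 1 := by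
      ext i; refine Fin.cases ?_ (fun j => ?_) i <;> simp
    have e1 : ∀ j : Fin n, (Fin.cons 0 (Pi.single j 1 : Fin n → ℝ) : Fin (n + 1) → ℝ) =
        Pi.single j.succ 1 := fun j => by
      ext i; refine Fin.cases ?_ (fun j => ?_) i <;> simp [Pi.single_apply, Fin.succ_inj]
    simp only [e0, e1] at this
    simp only [Fin.sum_univ_succ]
    exact this

lemma finite_gaussianMeasureN (n : ℕ) : IsFiniteMeasure (gaussianMeasureN n) := by
  have h := GaussianFourier.integrable_cexp_neg_mul_sq_norm_add (V := EuclideanSpace ℝ (Fin n))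
    (b := 1 / 2) (by norm_num) 0 0
  have h' := h.norm
  refine isFiniteMeasure_withDensity_ofReal (Integrable.hasFiniteIntegral ?_)
  refine Integrable.const_mul ?_ _
  refine h'.congr (Eventually.of_forall fun x => ?_)
  simp only [Complex.norm_exp]
  congr 1
  simp [← Complex.ofReal_pow]
  ring

lemma charFun_gaussianMeasureN (n : ℕ) (t : EuclideanSpace ℝ (Fin n)) :
    charFun (gaussianMeasureN n) t = Complex.exp (-‖t‖ ^ 2 / 2) := by
  have h := GaussianFourier.integral_cexp_neg_mul_sq_norm_add (V := EuclideanSpace ℝ (Fin n))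
    (b := 1 / 2) (by norm_num) Complex.I t
  rw [charFun_apply, gaussianMeasureN, integral_withDensity_eq_integral_toReal_smul
    (by fun_prop) (Eventually.of_forall fun x => ENNReal.ofReal_lt_top)]
  have e : ∀ x : EuclideanSpace ℝ (Fin n),
      (ENNReal.ofReal ((2 * π) ^ (-(n : ℝ) / 2) * rexp (-‖x‖ ^ 2 / 2))).toReal •
        Complex.exp (inner ℝ x t * Complex.I) =
      (((2 * π) ^ (-(n : ℝ) / 2) : ℝ) : ℂ) *
        Complex.exp (-(1 / 2) * ‖x‖ ^ 2 + Complex.I * inner ℝ t x) := fun x => by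
    rw [ENNReal.toReal_ofReal (by positivity), Complex.real_smul, Complex.ofReal_mul, mul_assoc,
      Complex.ofReal_exp, ← Complex.exp_add, real_inner_comm]
    congr 2
    push_cast
    ring
  simp_rw [e]
  rw [integral_const_mul, h]
  have e2 : ((π : ℂ) / (1 / 2)) ^ ((Module.finrank ℝ (EuclideanSpace ℝ (Fin n)) : ℂ) / 2) =
      (((2 * π) ^ ((n : ℝ) / 2) : ℝ) : ℂ) := by
    rw [Complex.ofReal_cpow (by positivity)]
    simp
    congr 1
    ring
  rw [e2, ← mul_assoc, ← Complex.ofReal_mul, ← Real.rpow_add (by positivity)]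
  have : -(n : ℝ) / 2 + (n : ℝ) / 2 = 0 := by ring
  rw [this]
  simp
  ring_nf

lemma gaussianMeasureN_eq (n : ℕ) :
    gaussianMeasureN n = (Measure.pi (fun _ : Fin n => gaussianReal 0 1)).map (WithLp.toLp 2) := by
  have := finite_gaussianMeasureN n
  rw [map_pi_eq_stdGaussian]
  apply Measure.ext_of_charFun
  ext t
  rw [charFun_gaussianMeasureN, charFun_stdGaussian]

lemma prob_gaussianMeasureN (n : ℕ) : IsProbabilityMeasure (gaussianMeasureN n) := by
  rw [gaussianMeasureN_eq, map_pi_eq_stdGaussian]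
  infer_instance

lemma glsi_gaussianMeasureN (n : ℕ) : GLSI (gaussianMeasureN n)
    (fun i : Fin n => EuclideanSpace.basisFun (Fin n) ℝ i) := by
  have h := (glsi_pi n).map
    ((PiLp.continuousLinearEquiv 2 ℝ (fun _ : Fin n => ℝ)).symm : (Fin n → ℝ) →L[ℝ] EuclideanSpace ℝ (Fin n))
  rw [gaussianMeasureN_eq]
  convert h using 2
  · rfl
  · rw [EuclideanSpace.basisFun_apply]
    rfl

lemma xlogx_bound {u v : ℝ} (hu : 0 ≤ u) (hv : 0 ≤ v) (huv : v ≤ u + 1) :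
    |v * log v| ≤ 2 * |u * log u| + 2 * u + 2 := by
  have l2 : log 2 ≤ 1 := by have := Real.log_two_lt_d9; linarith
  have l20 : 0 ≤ log 2 := log_nonneg (by norm_num)
  have nn := abs_nonneg (u * log u)
  rcases hv.eq_or_lt with rfl | hv
  · simp; positivity
  rcases le_or_gt v 1 with h | h
  · have := Real.abs_log_mul_self_lt v hv h
    rw [mul_comm]; linarith
  · have hlv : 0 ≤ log v := log_nonneg h.le
    rw [abs_of_nonneg (by positivity)]
    rcases le_or_gt u 1 with h1 | h1
    · have : v ≤ 2 := by linarith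
      calc v * log v ≤ 2 * log 2 := by gcongr
        _ ≤ _ := by linarith
    · have : v ≤ 2 * u := by linarith
      calc v * log v ≤ (2 * u) * log (2 * u) := by gcongr
        _ = 2 * (u * log u) + 2 * u * log 2 := by
            rw [log_mul (by norm_num) (by positivity)]; ring
        _ ≤ _ := by
            have := le_abs_self (u * log u)
            nlinarith

lemma norm_gradient_eq {E : Type*} [NormedAddCommGroup E] [InnerProductSpace ℝ E] [CompleteSpace E]
    (f : E → ℝ) (x : E) : ‖gradient f x‖ = ‖fderiv ℝ f x‖ := by
  simp [gradient]

theorem gaussian_log_sobolev (n : ℕ) (f : EuclideanSpace ℝ (Fin n) → ℝ)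
    (hf : ContDiff ℝ (⊤ : ℕ∞) f)
    (h1 : Integrable (fun x => (f x) ^ 2) (gaussianMeasureN n))
    (h2 : Integrable (fun x => ‖gradient f x‖ ^ 2) (gaussianMeasureN n))
    (h3 : Integrable
      (fun x => (f x) ^ 2 *
        Real.log ((f x) ^ 2 / ∫ y, (f y) ^ 2 ∂(gaussianMeasureN n)))
      (gaussianMeasureN n)) :
    ∫ x, (f x) ^ 2 *
        Real.log ((f x) ^ 2 / ∫ y, (f y) ^ 2 ∂(gaussianMeasureN n))
        ∂(gaussianMeasureN n)
      ≤ 2 * ∫ x, ‖gradient f x‖ ^ 2 ∂(gaussianMeasureN n) := by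
  have hprob := prob_gaussianMeasureN n
  set γ := gaussianMeasureN n with hγ
  set m := ∫ y, (f y) ^ 2 ∂γ with hm
  have m0 : 0 ≤ m := integral_nonneg fun x => sq_nonneg _
  rcases m0.eq_or_lt with hz | mpos
  · rw [← hz]
    simp only [div_zero, log_zero, mul_zero, integral_zero]
    exact mul_nonneg zero_le_two (integral_nonneg fun x => sq_nonneg _)
  have epsi : ∀ x, (f x) ^ 2 * log ((f x) ^ 2 / m) =
      (f x) ^ 2 * log ((f x) ^ 2) - (f x) ^ 2 * log m := fun x => by
    by_cases hx : f x = 0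
    · simp [hx]
    · rw [log_div (by positivity) mpos.ne']; ring
  have h4 : Integrable (fun x => (f x) ^ 2 * log ((f x) ^ 2)) γ := by
    have : Integrable (fun x => (f x) ^ 2 * log ((f x) ^ 2 / m) + (f x) ^ 2 * log m) γ :=
      h3.add (h1.mul_const _)
    refine this.congr (Eventually.of_forall fun x => ?_)
    simp only
    rw [epsi]; ring
  simp_rw [epsi]
  rw [integral_sub h4 (h1.mul_const _), integral_mul_const, ← hm]
  simp_rw [norm_gradient_eq] at h2 ⊢
  let η : ContDiffBump (0 : EuclideanSpace ℝ (Fin n)) := ⟨1, 2, one_pos, one_lt_two⟩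
  have ηs : ContDiff ℝ (⊤ : ℕ∞) (η : EuclideanSpace ℝ (Fin n) → ℝ) := η.contDiff
  have fdiff : ∀ x, HasFDerivAt f (fderiv ℝ f x) x := fun x =>
    (hf.differentiable (by simp) x).hasFDerivAt
  have ηdiff : ∀ x, HasFDerivAt η (fderiv ℝ η x) x := fun x =>
    (ηs.differentiable (by simp) x).hasFDerivAt
  obtain ⟨C, hC⟩ := (η.hasCompactSupport.fderiv (𝕜 := ℝ)).exists_bound_of_continuous
    (ηs.continuous_fderiv (by simp))
  have C0 : 0 ≤ C := (norm_nonneg _).trans (hC 0)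
  set c : ℕ → ℝ := fun k => 1 / ((k : ℝ) + 1) with hc
  have cpos : ∀ k, 0 < c k := fun k => by simp only [hc]; positivity
  have cle : ∀ k, c k ≤ 1 := fun k => by
    simp only [hc]
    rw [div_le_one (by positivity)]
    have : (0 : ℝ) ≤ k := Nat.cast_nonneg k
    linarith
  have clim : Tendsto c atTop (𝓝 0) := tendsto_one_div_add_atTop_nhds_zero_nat
  set F : ℕ → EuclideanSpace ℝ (Fin n) → ℝ := fun k x => η (c k • x) * f x with hF
  set F' : ℕ → EuclideanSpace ℝ (Fin n) → (EuclideanSpace ℝ (Fin n) →L[ℝ] ℝ) := fun k x =>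
    η (c k • x) • fderiv ℝ f x + f x • (c k • fderiv ℝ η (c k • x)) with hF'
  have Fd : ∀ k x, HasFDerivAt (F k) (F' k x) x := fun k x => by
    have h := ((ηdiff (c k • x)).comp x ((hasFDerivAt_id x).const_smul (c k))).mul (fdiff x)
    convert! h using 1
    ext v
    simp [hF']
  have Fs : ∀ k, ContDiff ℝ (⊤ : ℕ∞) (F k) := fun k =>
    (ηs.comp (contDiff_const_smul (c k))).mul hf
  have Fsupp : ∀ k, HasCompactSupport (F k) := fun k =>
    HasCompactSupport.mul_right (η.hasCompactSupport.comp_smul (cpos k).ne')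
  have F'c : ∀ k, Continuous (F' k) := fun k => by
    have : F' k = fderiv ℝ (F k) := funext fun x => (Fd k x).fderiv.symm
    rw [this]
    exact (Fs k).continuous_fderiv (by simp)
  set g : ℕ → EuclideanSpace ℝ (Fin n) → ℝ := fun k x => F k x ^ 2 + c k with hg
  have gd : ∀ k x, HasFDerivAt (g k) ((2 * F k x) • F' k x) x := fun k x => by
    have h := ((Fd k x).pow 2).add_const (c k)
    convert! h using 1
    ext v
    simp
  have Fle : ∀ k x, F k x ^ 2 ≤ f x ^ 2 := fun k x => by
    simp only [hF, mul_pow]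
    have a := η.nonneg (x := c k • x)
    have b := η.le_one (x := c k • x)
    have : η (c k • x) ^ 2 ≤ 1 := pow_le_one₀ a b
    nlinarith [sq_nonneg (f x)]
  have gle : ∀ k x, g k x ≤ f x ^ 2 + 1 := fun k x => add_le_add (Fle k x) (cle k)
  have gnn : ∀ k x, 0 ≤ g k x := fun k x => add_nonneg (sq_nonneg _) (cpos k).le
  have gs : ∀ k, ContDiff ℝ 1 (g k) := fun k =>
    (((Fs k).of_le (by exact_mod_cast le_top)).pow 2).add contDiff_const
  have gnice : ∀ k, ∃ M K, NiceFn (g k) (c k) M K := fun k => by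
    obtain ⟨M, hM⟩ := (Fsupp k).exists_bound_of_continuous (Fs k).continuous
    have hs : HasCompactSupport (fun x => (2 * F k x) • F' k x) :=
      ((Fsupp k).mul_left (f := fun _ => (2 : ℝ))).smul_right
    have hcont : Continuous (fun x => (2 * F k x) • F' k x) :=
      ((Fs k).continuous.const_mul 2).smul (F'c k)
    obtain ⟨K, hK⟩ := hs.exists_bound_of_continuous hcont
    refine ⟨M ^ 2 + 1, K, gs k, cpos k, fun x => ?_, fun x => ?_, fun x => ?_⟩
    · exact le_add_of_nonneg_left (sq_nonneg _)
    · refine add_le_add ?_ (cle k)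
      rw [← sq_abs]
      exact pow_le_pow_left₀ (abs_nonneg _) (hM x) 2
    · rw [(gd k x).fderiv]; exact hK x
  have F'bd : ∀ k x, ‖F' k x‖ ^ 2 ≤ 2 * ‖fderiv ℝ f x‖ ^ 2 + 2 * C ^ 2 * f x ^ 2 := fun k x => by
    have a := η.nonneg (x := c k • x)
    have b := η.le_one (x := c k • x)
    have t1 : ‖η (c k • x) • fderiv ℝ f x‖ ≤ ‖fderiv ℝ f x‖ := by
      rw [norm_smul, Real.norm_eq_abs, abs_of_nonneg a]
      exact mul_le_of_le_one_left (norm_nonneg _) b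
    have t2 : ‖f x • (c k • fderiv ℝ η (c k • x))‖ ≤ |f x| * C := by
      rw [norm_smul, norm_smul, Real.norm_eq_abs, Real.norm_eq_abs, abs_of_pos (cpos k)]
      refine mul_le_mul_of_nonneg_left ?_ (abs_nonneg _)
      exact (mul_le_of_le_one_left (norm_nonneg _) (cle k)).trans (hC _)
    have t3 : ‖F' k x‖ ≤ ‖fderiv ℝ f x‖ + |f x| * C := (norm_add_le _ _).trans (add_le_add t1 t2)
    have t4 := pow_le_pow_left₀ (norm_nonneg _) t3 2
    have t5 := sq_abs (f x)
    nlinarith [sq_nonneg (‖fderiv ℝ f x‖ - |f x| * C)]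
  have bdi : Integrable (fun x => 2 * ‖fderiv ℝ f x‖ ^ 2 + 2 * C ^ 2 * f x ^ 2) γ :=
    (h2.const_mul 2).add (h1.const_mul _)
  have F'i : ∀ k, Integrable (fun x => ‖F' k x‖ ^ 2) γ := fun k =>
    bdi.mono' ((F'c k).norm.pow 2).aestronglyMeasurable (Eventually.of_forall fun x => by
      rw [Real.norm_eq_abs, abs_of_nonneg (sq_nonneg _)]; exact F'bd k x)
  have main : ∀ k, ∫ x, g k x * log (g k x) ∂γ - (∫ x, g k x ∂γ) * log (∫ x, g k x ∂γ) ≤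
      2 * ∫ x, ‖F' k x‖ ^ 2 ∂γ := fun k => by
    obtain ⟨M, K, hN⟩ := gnice k
    refine (glsi_gaussianMeasureN n _ _ _ _ hN).trans ?_
    have : ∫ x, ∑ i, (fderiv ℝ (g k) x (EuclideanSpace.basisFun (Fin n) ℝ i)) ^ 2 / g k x ∂γ ≤
        ∫ x, 4 * ‖F' k x‖ ^ 2 ∂γ := by
      refine integral_mono (integrable_finsetSum _ fun i _ =>
        integrable_of_cont_bdd (hN.cont_fisher _) (hN.fisher_bd _)) ((F'i k).const_mul 4)
        fun x => ?_
      simp only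
      rw [(EuclideanSpace.basisFun (Fin n) ℝ).norm_dual (F' k x), ← Finset.sum_div,
        div_le_iff₀ (hN.gpos x), (gd k x).fderiv]
      simp only [_root_.smul_apply, smul_eq_mul, mul_pow, ← Finset.mul_sum]
      have s0 : 0 ≤ ∑ i, (F' k x (EuclideanSpace.basisFun (Fin n) ℝ i)) ^ 2 :=
        Finset.sum_nonneg fun i _ => sq_nonneg _
      have s1 : F k x ^ 2 ≤ g k x := le_add_of_nonneg_right (cpos k).le
      nlinarith [mul_le_mul_of_nonneg_left s1 s0]
    rw [integral_const_mul] at this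
    linarith
  have ηlim : ∀ x, Tendsto (fun k => η (c k • x)) atTop (𝓝 1) := fun x => by
    have a : Tendsto (fun k => c k • x) atTop (𝓝 ((0 : ℝ) • x)) := clim.smul_const x
    have b := (η.continuous.tendsto ((0 : ℝ) • x)).comp a
    rw [zero_smul, η.one_of_mem_closedBall (by simp [η])] at b
    exact b
  have glim : ∀ x, Tendsto (fun k => g k x) atTop (𝓝 (f x ^ 2)) := fun x => by
    have := (((ηlim x).mul_const (f x)).pow 2).add clim
    simpa using this
  have F'lim : ∀ x, Tendsto (fun k => F' k x) atTop (𝓝 (fderiv ℝ f x)) := fun x => by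
    have a : Tendsto (fun k => c k • fderiv ℝ η (c k • x)) atTop (𝓝 0) := by
      refine squeeze_zero_norm (a := fun k => c k * C) (fun k => ?_) (by simpa using clim.mul_const C)
      rw [norm_smul, Real.norm_eq_abs, abs_of_pos (cpos k)]
      exact mul_le_mul_of_nonneg_left (hC _) (cpos k).le
    have := ((ηlim x).smul_const (fderiv ℝ f x)).add (a.const_smul (f x))
    simpa using this
  have lim1 : Tendsto (fun k => ∫ x, g k x * log (g k x) ∂γ) atTop
      (𝓝 (∫ x, f x ^ 2 * log (f x ^ 2) ∂γ)) := by
    refine tendsto_integral_of_dominated_convergence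
      (fun x => 2 * |f x ^ 2 * log (f x ^ 2)| + 2 * f x ^ 2 + 2) (fun k => ?_) ?_ (fun k => ?_) ?_
    · exact (Real.continuous_mul_log.comp (gs k).continuous).aestronglyMeasurable
    · exact ((h4.abs.const_mul 2).add (h1.const_mul 2)).add (integrable_const _)
    · exact Eventually.of_forall fun x => xlogx_bound (sq_nonneg _) (gnn k x) (gle k x)
    · exact Eventually.of_forall fun x =>
        (Real.continuous_mul_log.tendsto (f x ^ 2)).comp (glim x)
  have lim2 : Tendsto (fun k => ∫ x, g k x ∂γ) atTop (𝓝 m) := by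
    refine tendsto_integral_of_dominated_convergence
      (fun x => f x ^ 2 + 1) (fun k => ?_) ?_ (fun k => ?_) ?_
    · exact (gs k).continuous.aestronglyMeasurable
    · exact h1.add (integrable_const _)
    · exact Eventually.of_forall fun x => by
        rw [Real.norm_eq_abs, abs_of_nonneg (gnn k x)]; exact gle k x
    · exact Eventually.of_forall glim
  have lim3 : Tendsto (fun k => ∫ x, ‖F' k x‖ ^ 2 ∂γ) atTop
      (𝓝 (∫ x, ‖fderiv ℝ f x‖ ^ 2 ∂γ)) := by
    refine tendsto_integral_of_dominated_convergence _ (fun k => (F'i k).1) bdi (fun k => ?_) ?_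
    · exact Eventually.of_forall fun x => by
        rw [Real.norm_eq_abs, abs_of_nonneg (sq_nonneg _)]; exact F'bd k x
    · exact Eventually.of_forall fun x => (F'lim x).norm.pow 2
  exact le_of_tendsto_of_tendsto'
    (lim1.sub ((Real.continuous_mul_log.tendsto m).comp lim2)) (lim3.const_mul 2) main
end
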